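/- Let 2 ≤ l ≤ n−1, let u = x_1 x_{l+1}^{a_{l+1}}⋯x_n^{a_n} and v = x_l x_n^{d−1} be monomials of degree d with u ≥_lex v, and let I = (L(u,v)) be the corresponding lexsegment ideal (a lexsegment ideal with linear resolution which is not a completely lexsegment ideal). Then I is of fiber type: the toric ideal P = ker φ of the Rees algebra of I is generated by P ∩ K[{T_w}_{w∈L(u,v)}] together with the elements of P that are homogeneous of degree 1 in the variables T_w. -/

import Mathlib

/-!
The map `φ` sends monomials to monomials, so `P` is spanned by the binomials `m - m'` whose two
monomials `m = x^a T_{u_1}⋯T_{u_N}` and `m' = x^b T_{v_1}⋯T_{v_N}` have the same image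
(`isFiberType_of_rel`). Each of them is shown to lie in the ideal generated by the fiber relations
and the linear relations, by induction on `deg x^a = deg x^b` (`SegLike.rel`). In degree `0` the
binomial is a fiber relation, and if `x^a` and `x^b` share a variable it can be divided out. It
therefore suffices to reach a common variable by linear relations `x_p T_w - x_q T_{w'}`,
`x_p w = x_q w'`.

The lexsegment consists of some monomials `x_1 w'` with `w'` in `x_{l+1},…,x_n`, and of all monomials
of degree `d` in `x_2,…,x_n` that involve one of `x_2,…,x_l` (`segLike_LSeg`). Let `x_p ∣ x^a` and
`x_q ∣ x^b`, with `x_q ∤ x^a`; then `x_q` divides some `u_k`.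
* If `2 ≤ p ≤ l` and `q ≤ l`, then `x_p u_k / x_q` is again in the lexsegment (`TRel.of_middle`).
* If `p ≤ l` and `x^b` involves only `x_{l+1},…,x_n`, count degrees in `x_1,…,x_l`: every generator
  has at least one such variable, so some `v_k` has at least two, both among `x_2,…,x_l`. Moving one
  of them into `x^b` in exchange for `x_q` reduces to the previous case (`TRel.of_left_head`).
* If neither `x^a` nor `x^b` involves `x_1,…,x_l`, one may take `q < p` by symmetry, and
  `x_p u_k / x_q` is in the lexsegment, since replacing a variable by a later one makes a
  monomial lexicographically smaller, and the part in `x_1,…,x_l` is unchanged.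
-/

/-- Monomials of `K[x_1,…,x_n]`, encoded by their exponent vectors (`x_1` ↔ index `0`). -/
abbrev Mon (n : ℕ) := Fin n →₀ ℕ

/-- Total degree of a monomial. -/
def mdeg {n : ℕ} (m : Mon n) : ℕ := ∑ i, m i

/-- `m <_lex m'` (so `m' >_lex m`) with `x_1 > x_2 > ⋯ > x_n`: at the first index where the
exponent vectors differ, `m'` has the larger exponent. -/
def LexLT {n : ℕ} (m m' : Mon n) : Prop :=
  ∃ i : Fin n, (∀ j, j < i → m j = m' j) ∧ m i < m' i

/-- `m ≤_lex m'`. -/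
def LexLE {n : ℕ} (m m' : Mon n) : Prop := m = m' ∨ LexLT m m'

/-- `m >_revlex m'` for monomials of equal degree: at the last index where the exponent
vectors differ, `m` has the smaller exponent. -/
def RevLexGT {n : ℕ} (m m' : Mon n) : Prop :=
  ∃ s : Fin n, (∀ t, s < t → m t = m' t) ∧ m s < m' s

/-- The decreasing revlexicographic order on monomials: `m <_σ m'` iff `deg m < deg m'`, or
the degrees agree and `m >_revlex m'`. -/
def DecRevLexLT {n : ℕ} (m m' : Mon n) : Prop :=
  mdeg m < mdeg m' ∨ (mdeg m = mdeg m' ∧ RevLexGT m m')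

/-- The lexsegment set `L(u,v) = {w ∈ M_d : u ≥_lex w ≥_lex v}`. -/
def LSeg {n : ℕ} (u v : Mon n) (d : ℕ) : Set (Mon n) :=
  {w | mdeg w = d ∧ LexLE w u ∧ LexLE v w}

/-- `A` is a lexsegment set inside `M_e`. -/
def IsLexSegmentSet {n : ℕ} (A : Set (Mon n)) (e : ℕ) : Prop :=
  ∃ u v : Mon n, mdeg u = e ∧ mdeg v = e ∧ LexLE v u ∧ A = LSeg u v e

/-- `(L(u,v))` is a completely lexsegment ideal: for every `k ≥ 0` the `k`-th shadow
`{m·w : m ∈ M_k, w ∈ L(u,v)}` is a lexsegment set in `M_{d+k}`. -/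
def IsCompletelyLex {n : ℕ} (u v : Mon n) (d : ℕ) : Prop :=
  ∀ k : ℕ,
    IsLexSegmentSet {w | ∃ m w₀, mdeg m = k ∧ w₀ ∈ LSeg u v d ∧ w = m + w₀} (d + k)

/-- The set of products of `N` monomials from `B`; for `B` a set of monomials of a fixed
degree `d` this is the minimal monomial generating set of `I^N`, `I = (B)`. -/
def prodSet {n : ℕ} (B : Set (Mon n)) (N : ℕ) : Set (Mon n) :=
  {m | ∃ f : Fin N → Mon n, (∀ i, f i ∈ B) ∧ m = ∑ i, f i}

/-- The equigenerated monomial ideal with (minimal) monomial generating set `G` has linear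
quotients with respect to the order given by `prec` (`prec a b` = "`a` is listed before
`b`"): for generators `u_j` before `u_i` there are a generator `u_k` before `u_i` and a
variable `x_q` with `u_k / gcd(u_k,u_i) = x_q` and `x_q ∣ u_j / gcd(u_j,u_i)`. -/
def LinQuotOrder {n : ℕ} (G : Set (Mon n)) (prec : Mon n → Mon n → Prop) : Prop :=
  ∀ uj ∈ G, ∀ ui ∈ G, prec uj ui →
    ∃ uk ∈ G, prec uk ui ∧ ∃ q : Fin n,
      (∀ p : Fin n, p ≠ q → uk p ≤ ui p) ∧ uk q = ui q + 1 ∧ ui q < uj q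

/-- The equigenerated monomial ideal with minimal monomial generating set `G` has linear
quotients (with respect to some linear order of the generators). -/
def HasLinQuot {n : ℕ} (G : Set (Mon n)) : Prop :=
  ∃ prec : Mon n → Mon n → Prop,
    (∀ a ∈ G, ¬ prec a a) ∧
    (∀ a ∈ G, ∀ b ∈ G, ∀ c ∈ G, prec a b → prec b c → prec a c) ∧
    (∀ a ∈ G, ∀ b ∈ G, a ≠ b → prec a b ∨ prec b a) ∧
    LinQuotOrder G prec
/-- A monomial order on a polynomial ring with variables indexed by `α`, given as a strict
total order on exponent vectors which is compatible with multiplication of monomials and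
for which `1` is the smallest monomial. -/
structure MonOrd (α : Type*) where
  lt : (α →₀ ℕ) → (α →₀ ℕ) → Prop
  irrefl : ∀ a, ¬ lt a a
  trans : ∀ a b c, lt a b → lt b c → lt a c
  total : ∀ a b, a ≠ b → lt a b ∨ lt b a
  add_right : ∀ a b c, lt a b → lt (a + c) (b + c)
  zero_lt : ∀ a, a ≠ 0 → lt 0 a

/-- The map `π : R = K[{T_u}_{u ∈ B}] → S`, `T_u ↦ u`. -/
noncomputable def piB {n : ℕ} (K : Type*) [Field K] (B : Set (Mon n)) :
    MvPolynomial ↥B K →ₐ[K] MvPolynomial (Fin n) K :=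
  MvPolynomial.aeval (fun u : ↥B => MvPolynomial.monomial (u : Mon n) (1 : K))

/-- The toric ideal `J = ker π` of `K[B]`. -/
noncomputable def toricJ {n : ℕ} (K : Type*) [Field K] (B : Set (Mon n)) :
    Ideal (MvPolynomial ↥B K) :=
  RingHom.ker (piB K B).toRingHom

/-- `m` is the leading monomial of `f ≠ 0` with respect to the order `lt` on exponent
vectors. -/
def IsLeadMon {α K : Type*} [CommSemiring K] (lt : (α →₀ ℕ) → (α →₀ ℕ) → Prop)
    (f : MvPolynomial α K) (m : α →₀ ℕ) : Prop :=
  m ∈ f.support ∧ ∀ m' ∈ f.support, m' ≠ m → lt m' m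

/-- `m` is a standard monomial of the ideal `J` with respect to the order `lt`: it is not
the leading monomial of any nonzero element of `J`. -/
def IsStdMon {α K : Type*} [CommSemiring K] (lt : (α →₀ ℕ) → (α →₀ ℕ) → Prop)
    (J : Ideal (MvPolynomial α K)) (m : α →₀ ℕ) : Prop :=
  ∀ f ∈ J, f ≠ 0 → ¬ IsLeadMon lt f m

/-- The image in `S` of a monomial `T_{u_1} ⋯ T_{u_N}` of `R`, i.e. the product
`u_1 ⋯ u_N`. -/
noncomputable def expandB {n : ℕ} {B : Set (Mon n)} (e : ↥B →₀ ℕ) : Mon n :=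
  e.sum fun u k => k • (u : Mon n)

/-- The number `N` of factors of a monomial `T_{u_1} ⋯ T_{u_N}` of `R`. -/
def edeg {n : ℕ} {B : Set (Mon n)} (e : ↥B →₀ ℕ) : ℕ := e.sum fun _ k => k

/-- `B` satisfies the σ-exchange property (with respect to the order `ltσ` on the monomials
of `S` and the order `ltR` on the monomials of `R = K[{T_u}_{u∈B}]`): whenever
`T_{u_1}⋯T_{u_N}` and `T_{v_1}⋯T_{v_N}` are standard monomials of `J` with
`u_1⋯u_N <_σ v_1⋯v_N`, there are a factor `u_δ`, a `q ∈ supp(v_1⋯v_N)` and a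
`j ∈ supp(u_δ)` with `ν_q(u_1⋯u_N) < ν_q(v_1⋯v_N)`, `x_j <_σ x_q` and
`x_q u_δ / x_j ∈ B`. -/
def SigmaExchange {n : ℕ} (K : Type*) [Field K] (B : Set (Mon n))
    (ltσ : Mon n → Mon n → Prop)
    (ltR : (↥B →₀ ℕ) → (↥B →₀ ℕ) → Prop) : Prop :=
  ∀ e e' : ↥B →₀ ℕ, edeg e = edeg e' →
    IsStdMon ltR (toricJ K B) e → IsStdMon ltR (toricJ K B) e' →
    ltσ (expandB e) (expandB e') →
    ∃ uδ : ↥B, 0 < e uδ ∧ ∃ q j : Fin n,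
      expandB e q < expandB e' q ∧
      0 < (uδ : Mon n) j ∧
      ltσ (Finsupp.single j 1) (Finsupp.single q 1) ∧
      ((uδ : Mon n) + Finsupp.single q 1 - Finsupp.single j 1) ∈ B

/-- The map `φ : 𝒯 = K[x_1,…,x_n,{T_u}_{u∈B}] → S[t]`, `x_i ↦ x_i`, `T_u ↦ u·t`; its image
is the Rees algebra of `I = (B)`. -/
noncomputable def reesPhi {n : ℕ} (K : Type*) [Field K] (B : Set (Mon n)) :
    MvPolynomial (Fin n ⊕ ↥B) K →ₐ[K] Polynomial (MvPolynomial (Fin n) K) :=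
  MvPolynomial.aeval (Sum.elim
    (fun i : Fin n => Polynomial.C (MvPolynomial.X i))
    (fun u : ↥B => Polynomial.C (MvPolynomial.monomial (u : Mon n) (1 : K)) * Polynomial.X))

/-- The toric ideal `P = ker φ` of the Rees algebra of `I = (B)`. -/
noncomputable def reesP {n : ℕ} (K : Type*) [Field K] (B : Set (Mon n)) :
    Ideal (MvPolynomial (Fin n ⊕ ↥B) K) :=
  RingHom.ker (reesPhi K B).toRingHom

/-- `f ∈ 𝒯` only involves the variables `T_u`, i.e. `f ∈ K[{T_u}_{u∈B}]`. -/
def OnlyT {n : ℕ} {K : Type*} [Field K] {B : Set (Mon n)}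
    (f : MvPolynomial (Fin n ⊕ ↥B) K) : Prop :=
  ∀ m ∈ f.support, ∀ i : Fin n, m (Sum.inl i) = 0

/-- `f ∈ 𝒯` is homogeneous of degree `1` in the variables `T_u`. -/
def TDegOne {n : ℕ} {K : Type*} [Field K] {B : Set (Mon n)}
    (f : MvPolynomial (Fin n ⊕ ↥B) K) : Prop :=
  ∀ m ∈ f.support, (∑ s ∈ m.support, if s.isRight then m s else 0) = 1

/-- The monomial ideal `I = (B)` is of fiber type: the toric ideal `P` of its Rees algebra
is generated by `P ∩ K[{T_u}_{u∈B}]` together with the elements of `P` homogeneous of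
degree `1` in the variables `T_u`. -/
def IsFiberType {n : ℕ} (K : Type*) [Field K] (B : Set (Mon n)) : Prop :=
  reesP K B =
    Ideal.span ({f | f ∈ reesP K B ∧ OnlyT f} ∪ {f | f ∈ reesP K B ∧ TDegOne f})

/-- The `S`-part of a monomial of `𝒯`. -/
noncomputable def sPart {n : ℕ} {B : Set (Mon n)} (m : (Fin n ⊕ ↥B) →₀ ℕ) : Mon n :=
  (Finsupp.sumFinsuppEquivProdFinsupp m).1

/-- The `T`-part of a monomial of `𝒯`. -/
noncomputable def tPart {n : ℕ} {B : Set (Mon n)} (m : (Fin n ⊕ ↥B) →₀ ℕ) : ↥B →₀ ℕ :=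
  (Finsupp.sumFinsuppEquivProdFinsupp m).2

/-- The product order `<_σ^#` on the monomials of `𝒯 = K[x_1,…,x_n,{T_u}_{u∈B}]`. -/
def ProdLT {n : ℕ} {B : Set (Mon n)} (ltσ : Mon n → Mon n → Prop)
    (ltR : (↥B →₀ ℕ) → (↥B →₀ ℕ) → Prop)
    (m m' : (Fin n ⊕ ↥B) →₀ ℕ) : Prop :=
  ltσ (sPart m) (sPart m') ∨ (sPart m = sPart m' ∧ ltR (tPart m) (tPart m'))

/-- `G` is a Gröbner basis of the ideal `P` with respect to the order `lt`: the leading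
monomial of every nonzero `f ∈ P` is divisible by the leading monomial of some element
of `G`. -/
def IsGB {α K : Type*} [CommSemiring K] (lt : (α →₀ ℕ) → (α →₀ ℕ) → Prop)
    (P : Ideal (MvPolynomial α K)) (G : Set (MvPolynomial α K)) : Prop :=
  ∀ f ∈ P, f ≠ 0 → ∃ g ∈ G, g ≠ 0 ∧
    ∃ mg mf, IsLeadMon lt g mg ∧ IsLeadMon lt f mf ∧ mg ≤ mf

/-! ### Monomials of `𝒯` and their images -/

@[simp] lemma sPart_apply {n : ℕ} {B : Set (Mon n)} (m : (Fin n ⊕ ↥B) →₀ ℕ) (i : Fin n) :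
    sPart m i = m (Sum.inl i) := rfl

@[simp] lemma tPart_apply {n : ℕ} {B : Set (Mon n)} (m : (Fin n ⊕ ↥B) →₀ ℕ) (w : ↥B) :
    tPart m w = m (Sum.inr w) := rfl

lemma sPart_add {n : ℕ} {B : Set (Mon n)} (m m' : (Fin n ⊕ ↥B) →₀ ℕ) :
    sPart (m + m') = sPart m + sPart m' := by
  ext i; simp

lemma tPart_add {n : ℕ} {B : Set (Mon n)} (m m' : (Fin n ⊕ ↥B) →₀ ℕ) :
    tPart (m + m') = tPart m + tPart m' := by
  ext i; simp

@[simp] lemma sPart_inl {n : ℕ} {B : Set (Mon n)} (i : Fin n) (k : ℕ) :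
    sPart (Finsupp.single (Sum.inl i : Fin n ⊕ ↥B) k) = Finsupp.single i k := by
  ext j; simp [Finsupp.single_apply]

@[simp] lemma tPart_inl {n : ℕ} {B : Set (Mon n)} (i : Fin n) (k : ℕ) :
    tPart (Finsupp.single (Sum.inl i : Fin n ⊕ ↥B) k) = 0 := by
  ext j; simp

@[simp] lemma sPart_inr {n : ℕ} {B : Set (Mon n)} (w : ↥B) (k : ℕ) :
    sPart (Finsupp.single (Sum.inr w : Fin n ⊕ ↥B) k) = 0 := by
  ext j; simp

@[simp] lemma tPart_inr {n : ℕ} {B : Set (Mon n)} (w : ↥B) (k : ℕ) :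
    tPart (Finsupp.single (Sum.inr w : Fin n ⊕ ↥B) k) = Finsupp.single w k := by
  ext j; simp [Finsupp.single_apply]

lemma expandB_add {n : ℕ} {B : Set (Mon n)} (e e' : ↥B →₀ ℕ) :
    expandB (e + e') = expandB e + expandB e' := by
  unfold expandB
  exact Finsupp.sum_add_index' (by simp) (by intros; rw [add_smul])

lemma edeg_add {n : ℕ} {B : Set (Mon n)} (e e' : ↥B →₀ ℕ) :
    edeg (e + e') = edeg e + edeg e' := by
  unfold edeg
  exact Finsupp.sum_add_index' (by simp) (by intros; rfl)

@[simp] lemma expandB_single {n : ℕ} {B : Set (Mon n)} (w : ↥B) :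
    expandB (Finsupp.single w 1) = (w : Mon n) := by
  simp [expandB]

@[simp] lemma expandB_zero {n : ℕ} {B : Set (Mon n)} :
    expandB (0 : ↥B →₀ ℕ) = 0 := by
  simp [expandB]

@[simp] lemma edeg_single {n : ℕ} {B : Set (Mon n)} (w : ↥B) (k : ℕ) :
    edeg (Finsupp.single w k) = k := by
  simp [edeg]

@[simp] lemma edeg_zero {n : ℕ} {B : Set (Mon n)} :
    edeg (0 : ↥B →₀ ℕ) = 0 := by
  simp [edeg]

/-- The exponent vector of the `S`-part of `φ(m)` for a monomial `m` of `𝒯`: if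
`m = x^a T_{u_1} ⋯ T_{u_N}`, then `φ(m) = (x^a u_1 ⋯ u_N) t^N` and `tot m` is the exponent
vector of `x^a u_1 ⋯ u_N`. -/
noncomputable def tot {n : ℕ} {B : Set (Mon n)} (m : (Fin n ⊕ ↥B) →₀ ℕ) : Mon n :=
  sPart m + expandB (tPart m)

lemma tot_add {n : ℕ} {B : Set (Mon n)} (m m' : (Fin n ⊕ ↥B) →₀ ℕ) :
    tot (m + m') = tot m + tot m' := by
  simp only [tot, sPart_add, tPart_add, expandB_add]; abel

lemma reesPhi_monomial {n : ℕ} (K : Type*) [Field K] {B : Set (Mon n)}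
    (m : (Fin n ⊕ ↥B) →₀ ℕ) (c : K) :
    reesPhi K B (MvPolynomial.monomial m c) =
      Polynomial.monomial (edeg (tPart m)) (MvPolynomial.monomial (tot m) c) := by
  induction m using Finsupp.induction_linear generalizing c with
  | zero =>
    have h1 : tot (0 : (Fin n ⊕ ↥B) →₀ ℕ) = 0 := by ext; simp [tot, expandB, Finsupp.sum]
    have h2 : edeg (tPart (0 : (Fin n ⊕ ↥B) →₀ ℕ)) = 0 := by simp [edeg, Finsupp.sum]
    rw [h1, h2]
    change reesPhi K B (MvPolynomial.C c) = _
    rw [reesPhi, MvPolynomial.aeval_C]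
    rfl
  | add f g hf hg =>
    have : (MvPolynomial.monomial (f + g) c : MvPolynomial (Fin n ⊕ ↥B) K) =
        MvPolynomial.monomial f c * MvPolynomial.monomial g 1 := by
      simp [MvPolynomial.monomial_mul]
    rw [this, map_mul, hf, hg, Polynomial.monomial_mul_monomial, MvPolynomial.monomial_mul,
      tot_add, tPart_add, edeg_add, mul_one]
  | single s k =>
    have : (MvPolynomial.monomial (Finsupp.single s k) c : MvPolynomial (Fin n ⊕ ↥B) K) =
        MvPolynomial.C c * MvPolynomial.X s ^ k := by
      rw [MvPolynomial.C_mul_X_pow_eq_monomial]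
    rw [this, map_mul, map_pow, reesPhi, MvPolynomial.aeval_C, MvPolynomial.aeval_X]
    have hc : (algebraMap K (Polynomial (MvPolynomial (Fin n) K))) c =
      Polynomial.C (MvPolynomial.C c) := rfl
    rw [hc]
    rcases s with i | w
    · rw [← Polynomial.C_mul_X_pow_eq_monomial]
      simp [tot, MvPolynomial.C_mul_X_pow_eq_monomial, ← map_pow, ← map_mul]
    · rw [← Polynomial.C_mul_X_pow_eq_monomial]
      simp [tot, mul_pow, ← mul_assoc, ← map_pow, ← map_mul, MvPolynomial.monomial_pow,
        MvPolynomial.C_mul_monomial, expandB]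

/-! ### Reduction to binomials -/

/-- The ideal generated by the fiber relations and the linear relations of the Rees algebra. -/
noncomputable def fiberJ {n : ℕ} (K : Type*) [Field K] (B : Set (Mon n)) :
    Ideal (MvPolynomial (Fin n ⊕ ↥B) K) :=
  Ideal.span ({f | f ∈ reesP K B ∧ OnlyT f} ∪ {f | f ∈ reesP K B ∧ TDegOne f})

/-- Two monomials of `𝒯` are related if their difference lies in `fiberJ`. -/
def TRel {n : ℕ} (K : Type*) [Field K] {B : Set (Mon n)} (m m' : (Fin n ⊕ ↥B) →₀ ℕ) : Prop :=
  (MvPolynomial.monomial m 1 - MvPolynomial.monomial m' 1 : MvPolynomial (Fin n ⊕ ↥B) K)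
    ∈ fiberJ K B

section TRel
variable {n : ℕ} {K : Type*} [Field K] {B : Set (Mon n)} {m m' m'' : (Fin n ⊕ ↥B) →₀ ℕ}

lemma TRel.symm (h : TRel K m m') : TRel K m' m := by
  unfold TRel at *; rw [← neg_sub]; exact neg_mem h

lemma TRel.trans (h : TRel K m m') (h' : TRel K m' m'') : TRel K m m'' := by
  unfold TRel at *; simpa using add_mem h h'

lemma TRel.add (h : TRel K m m') (c : (Fin n ⊕ ↥B) →₀ ℕ) : TRel K (c + m) (c + m') := by
  unfold TRel at *
  have := Ideal.mul_mem_left _ (MvPolynomial.monomial c 1) h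
  simpa [mul_sub, MvPolynomial.monomial_mul] using this

lemma binomial_mem_reesP (h1 : tot m = tot m') (h2 : edeg (tPart m) = edeg (tPart m')) :
    (MvPolynomial.monomial m 1 - MvPolynomial.monomial m' 1 : MvPolynomial (Fin n ⊕ ↥B) K)
      ∈ reesP K B := by
  change reesPhi K B _ = 0
  rw [map_sub, reesPhi_monomial, reesPhi_monomial, h1, h2, sub_self]

lemma mem_support_binomial {σ : Type*} {a b s : σ →₀ ℕ}
    (h : s ∈ (MvPolynomial.monomial a 1 - MvPolynomial.monomial b 1 :
      MvPolynomial σ K).support) : s = a ∨ s = b := by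
  classical
  by_contra! hne
  rw [MvPolynomial.mem_support_iff, MvPolynomial.coeff_sub, MvPolynomial.coeff_monomial,
    MvPolynomial.coeff_monomial, if_neg (Ne.symm hne.1), if_neg (Ne.symm hne.2)] at h
  simp at h

lemma tdeg_eq (m : (Fin n ⊕ ↥B) →₀ ℕ) :
    (∑ s ∈ m.support, if s.isRight then m s else 0) = edeg (tPart m) := by
  change (m.sum fun s k => if s.isRight then k else 0) = _
  induction m using Finsupp.induction_linear with
  | zero =>
    have h2 : tPart (0 : (Fin n ⊕ ↥B) →₀ ℕ) = 0 := by ext; simp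
    rw [h2]; simp
  | add f g hf hg =>
    rw [tPart_add, edeg_add, ← hf, ← hg]
    exact Finsupp.sum_add_index' (by simp) (by intros; split_ifs <;> rfl)
  | single s k => rcases s with i | w <;> simp

lemma TRel.of_onlyT (h1 : tot m = tot m') (h2 : edeg (tPart m) = edeg (tPart m'))
    (h : ∀ i, m (Sum.inl i) = 0) (h' : ∀ i, m' (Sum.inl i) = 0) : TRel K m m' := by
  refine Ideal.subset_span (Or.inl ⟨binomial_mem_reesP h1 h2, fun s hs i => ?_⟩)
  rcases mem_support_binomial hs with rfl | rfl
  exacts [h i, h' i]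

lemma TRel.linear {p q : Fin n} {w w' : ↥B}
    (h : (w : Mon n) + Finsupp.single p 1 = (w' : Mon n) + Finsupp.single q 1) :
    TRel K (Finsupp.single (Sum.inl p) 1 + Finsupp.single (Sum.inr w) 1)
      (Finsupp.single (Sum.inl q) 1 + Finsupp.single (Sum.inr w') 1) := by
  refine Ideal.subset_span (Or.inr ⟨binomial_mem_reesP ?_ ?_, fun s hs => ?_⟩)
  · simp only [tot_add]; simp [tot, add_comm, h]
  · simp [tPart_add]
  · rw [tdeg_eq]
    rcases mem_support_binomial hs with rfl | rfl <;> simp [tPart_add]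

/-- Since `φ` is a monomial map, `P` is spanned by binomials, so fiber type can be tested on
pairs of monomials with the same image. -/
lemma isFiberType_of_rel
    (h : ∀ m m' : (Fin n ⊕ ↥B) →₀ ℕ, tot m = tot m' → edeg (tPart m) = edeg (tPart m') →
      TRel K m m') : IsFiberType K B := by
  classical
  apply le_antisymm
  · -- A section of `φ` on monomials, extended linearly to `D`, gives `f ≡ D (φ f)` modulo `fiberJ`.
    have hrep : ∀ (N : ℕ) (g : Mon n), ∃ r : (Fin n ⊕ ↥B) →₀ ℕ,
        (∃ m : (Fin n ⊕ ↥B) →₀ ℕ, tot m = g ∧ edeg (tPart m) = N) →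
          tot r = g ∧ edeg (tPart r) = N := by
      intro N g
      by_cases hm : ∃ m : (Fin n ⊕ ↥B) →₀ ℕ, tot m = g ∧ edeg (tPart m) = N
      · exact ⟨hm.choose, fun _ => hm.choose_spec⟩
      · exact ⟨0, fun h => absurd h hm⟩
    choose r hr using hrep
    let E : ℕ → (MvPolynomial (Fin n) K →ₗ[K] MvPolynomial (Fin n ⊕ ↥B) K) := fun N =>
      (MvPolynomial.basisMonomials (Fin n) K).constr K
        (fun g => MvPolynomial.monomial (r N g) (1 : K))
    have hE : ∀ N g c, E N (MvPolynomial.monomial g c) = MvPolynomial.monomial (r N g) c := by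
      intro N g c
      have h1 : (MvPolynomial.monomial g c : MvPolynomial (Fin n) K) =
          c • MvPolynomial.basisMonomials (Fin n) K g := by
        simp [MvPolynomial.coe_basisMonomials, MvPolynomial.smul_monomial]
      rw [h1, map_smul, Module.Basis.constr_basis, MvPolynomial.smul_monomial]
      simp
    let D : Polynomial (MvPolynomial (Fin n) K) → MvPolynomial (Fin n ⊕ ↥B) K := fun p =>
      p.sum fun N q => E N q
    have key : ∀ f : MvPolynomial (Fin n ⊕ ↥B) K, f - D (reesPhi K B f) ∈ fiberJ K B := by
      intro f
      induction f using MvPolynomial.induction_on' with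
      | monomial m c =>
        have hD : D (reesPhi K B (MvPolynomial.monomial m c)) =
            MvPolynomial.monomial (r (edeg (tPart m)) (tot m)) c := by
          rw [reesPhi_monomial]
          simp only [D]
          rw [Polynomial.sum_monomial_index _ _ (by simp), hE]
        rw [hD]
        obtain ⟨h1, h2⟩ := hr (edeg (tPart m)) (tot m) ⟨m, rfl, rfl⟩
        have := Ideal.mul_mem_left _ (MvPolynomial.C c) (h _ _ h1.symm h2.symm)
        simpa [mul_sub, MvPolynomial.C_mul_monomial] using this
      | add p q hp hq =>
        have hD : D (reesPhi K B (p + q)) = D (reesPhi K B p) + D (reesPhi K B q) := by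
          rw [map_add]
          exact Polynomial.sum_add_index _ _ _ (by simp) (by simp)
        rw [hD, add_sub_add_comm]
        exact add_mem hp hq
    intro f hf
    have hf0 : reesPhi K B f = 0 := hf
    have := key f
    rw [hf0] at this
    simpa [D, fiberJ] using this
  · rw [Ideal.span_le]
    rintro f (hf | hf) <;> exact hf.1

/-! ### Linear exchange of one variable -/

/-- Multiplying by one and the same variable preserves `TRel`, so two monomials sharing a
variable `x_i` may be compared after dividing by `x_i`. -/
lemma TRel.of_common
    (IH : ∀ c c' : (Fin n ⊕ ↥B) →₀ ℕ, mdeg (sPart c) < mdeg (sPart m) → tot c = tot c' →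
      edeg (tPart c) = edeg (tPart c') → TRel K c c')
    (h1 : tot m = tot m') (h2 : edeg (tPart m) = edeg (tPart m'))
    {i : Fin n} (hi : 0 < sPart m i) (hi' : 0 < sPart m' i) : TRel K m m' := by
  have hd (m : (Fin n ⊕ ↥B) →₀ ℕ) (hi : 0 < sPart m i) :
      ∃ c, m = Finsupp.single (Sum.inl i) 1 + c := by
    refine ⟨m - Finsupp.single (Sum.inl i) 1, (add_tsub_cancel_of_le ?_).symm⟩
    rw [Finsupp.single_le_iff]
    exact hi
  obtain ⟨c, rfl⟩ := hd m hi
  obtain ⟨c', rfl⟩ := hd m' hi'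
  refine TRel.add (IH c c' ?_ ?_ ?_) _
  · simp [mdeg, sPart_add, Finset.sum_add_distrib, Finsupp.single_apply]
  · simpa [tot_add] using h1
  · simpa [tPart_add, edeg_add] using h2

/-- Replacing `x_p T_w` by `x_q T_{w'}`, where `x_p w = x_q w'`, inside a monomial of `𝒯`. -/
lemma TRel.exchange {p q : Fin n} {w w' : ↥B} (hp : 0 < sPart m p) (hw : 0 < tPart m w)
    (h : (w : Mon n) + Finsupp.single p 1 = (w' : Mon n) + Finsupp.single q 1) :
    ∃ m', TRel K m m' ∧ tot m = tot m' ∧ edeg (tPart m) = edeg (tPart m') ∧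
      sPart m + Finsupp.single q 1 = sPart m' + Finsupp.single p 1 := by
  obtain ⟨c, rfl⟩ : ∃ c, m = c + (Finsupp.single (Sum.inl p) 1 + Finsupp.single (Sum.inr w) 1) := by
    refine ⟨m - (Finsupp.single (Sum.inl p) 1 + Finsupp.single (Sum.inr w) 1),
      (tsub_add_cancel_of_le ?_).symm⟩
    rintro (i | x)
    · by_cases hi : i = p
      · subst hi; simpa [Nat.succ_le_iff] using hp
      · simp [Ne.symm hi]
    · by_cases hx : x = w
      · subst hx; simpa [Nat.succ_le_iff] using hw
      · simp [Ne.symm hx]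
  refine ⟨c + (Finsupp.single (Sum.inl q) 1 + Finsupp.single (Sum.inr w') 1),
    (TRel.linear h).add c, ?_, ?_, ?_⟩
  · simp only [tot_add]; congr 1; simp [tot, add_comm, h]
  · simp [tPart_add, edeg_add]
  · simp only [sPart_add, sPart_inl, sPart_inr]; abel

lemma map_tot (lam : Mon n →+ ℕ) (m : (Fin n ⊕ ↥B) →₀ ℕ) :
    lam (tot m) = lam (sPart m) + ∑ w ∈ (tPart m).support, tPart m w * lam (w : Mon n) := by
  simp [tot, expandB, Finsupp.sum, map_sum]

/-- The total degree as an additive map. -/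
def mdegHom (n : ℕ) : Mon n →+ ℕ where
  toFun := mdeg
  map_zero' := by simp [mdeg]
  map_add' := by intro a b; simp [mdeg, Finset.sum_add_distrib]

lemma mdeg_add (a b : Mon n) : mdeg (a + b) = mdeg a + mdeg b := (mdegHom n).map_add a b

@[simp] lemma mdeg_single (i : Fin n) (k : ℕ) : mdeg (Finsupp.single i k) = k := by
  simp [mdeg, Finsupp.single_apply]

/-- The degree of a monomial in the first `l` variables, as an additive map. -/
def headDeg (n l : ℕ) : Mon n →+ ℕ where
  toFun m := ∑ i : Fin n, if (i : ℕ) < l then m i else 0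
  map_zero' := by simp
  map_add' := by
    intro a b; rw [← Finset.sum_add_distrib]
    exact Finset.sum_congr rfl fun i _ => by split_ifs <;> simp

lemma headDeg_apply (l : ℕ) (m : Mon n) :
    headDeg n l m = ∑ i : Fin n, if (i : ℕ) < l then m i else 0 := rfl

lemma headDeg_single (l : ℕ) (i : Fin n) :
    headDeg n l (Finsupp.single i 1) = if (i : ℕ) < l then 1 else 0 := by
  rw [headDeg_apply, Finset.sum_eq_single i]
  · simp
  · intro b _ hb; simp [Ne.symm hb]
  · simp

lemma headDeg_pos (l : ℕ) (m : Mon n) :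
    0 < headDeg n l m ↔ ∃ i : Fin n, (i : ℕ) < l ∧ 0 < m i := by
  rw [headDeg_apply, Finset.sum_pos_iff]
  constructor
  · rintro ⟨i, -, hi⟩
    by_cases h : (i : ℕ) < l
    · exact ⟨i, h, by simpa [h] using hi⟩
    · simp [h] at hi
  · rintro ⟨i, h, hi⟩; exact ⟨i, Finset.mem_univ _, by simpa [h] using hi⟩

lemma exists_factor {q : Fin n} (h : sPart m q < tot m q) :
    ∃ w : ↥B, 0 < tPart m w ∧ 0 < (w : Mon n) q := by
  by_contra! hc
  have := map_tot (Finsupp.applyAddHom q) m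
  simp only [Finsupp.applyAddHom_apply] at this
  rw [Finset.sum_eq_zero] at this
  · omega
  · intro w _
    rcases Nat.eq_zero_or_pos (tPart m w) with h0 | h0
    · rw [h0, zero_mul]
    · rw [Nat.le_zero.mp (hc w h0), mul_zero]

/-- Cancelling one variable of `w` against another one. -/
lemma exists_replace (w : Mon n) {q : Fin n} (p : Fin n) (hq : 0 < w q) :
    ∃ w' : Mon n, w + Finsupp.single p 1 = w' + Finsupp.single q 1 ∧
      ∀ i, w i + (if i = p then 1 else 0) = w' i + (if i = q then 1 else 0) := by
  have h : w + Finsupp.single p 1 =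
      (w - Finsupp.single q 1 + Finsupp.single p 1) + Finsupp.single q 1 := by
    rw [add_right_comm, tsub_add_cancel_of_le]
    rw [Finsupp.single_le_iff]; exact hq
  refine ⟨_, h, fun i => ?_⟩
  have := DFunLike.congr_fun h i
  simpa [Finsupp.single_apply, eq_comm] using this

end TRel

/-! ### The combinatorial core -/

section Core
variable {n : ℕ} {K : Type*} [Field K] {B : Set (Mon n)} {m m' : (Fin n ⊕ ↥B) →₀ ℕ}

/-- The properties of `B = L(u,v)` on which the argument rests, with `x_1` written as `z`.
Its monomials are of degree `d`; each is either `x_1` times a monomial in `x_{l+1},…,x_n`, or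
avoids `x_1` and is divisible by one of `x_2,…,x_l` (and all the latter monomials occur); and
one may replace in it a variable `x_q`, `q > l`, by a later one. -/
structure SegLike (B : Set (Mon n)) (z : Fin n) (l d : ℕ) : Prop where
  z_lt : (z : ℕ) < l
  deg : ∀ w ∈ B, mdeg w = d
  le_one : ∀ w ∈ B, w z ≤ 1
  of_one : ∀ w ∈ B, w z = 1 → ∀ i : Fin n, i ≠ z → (i : ℕ) < l → w i = 0
  of_zero : ∀ w ∈ B, w z = 0 → ∃ i : Fin n, i ≠ z ∧ (i : ℕ) < l ∧ 0 < w i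
  mem : ∀ w : Mon n, mdeg w = d → w z = 0 → ∀ i : Fin n, i ≠ z → (i : ℕ) < l → 0 < w i → w ∈ B
  shift : ∀ w ∈ B, ∀ p q : Fin n, l ≤ (q : ℕ) → q < p → ∀ w' : Mon n,
    w + Finsupp.single p 1 = w' + Finsupp.single q 1 → w' ∈ B

variable {z : Fin n} {l d : ℕ}

lemma SegLike.one_le_headDeg (hB : SegLike B z l d) {w : Mon n} (hw : w ∈ B) :
    1 ≤ headDeg n l w := by
  rw [Nat.succ_le_iff, headDeg_pos]
  rcases Nat.eq_zero_or_pos (w z) with h | h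
  · obtain ⟨i, -, h1, h2⟩ := hB.of_zero w hw h
    exact ⟨i, h1, h2⟩
  · exact ⟨z, hB.z_lt, h⟩

lemma SegLike.eq_zero_of_two_le (hB : SegLike B z l d) {w : Mon n} (hw : w ∈ B)
    (h : 2 ≤ headDeg n l w) : w z = 0 := by
  by_contra h0
  have h1 : w z = 1 := by have := hB.le_one w hw; omega
  rw [headDeg_apply, Finset.sum_eq_single z] at h
  · split_ifs at h <;> omega
  · intro i _ hi
    split_ifs with hl
    · exact hB.of_one w hw h1 i hi hl
    · rfl
  · simp

lemma mdeg_replace {w w' : Mon n} {p q : Fin n}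
    (h : w + Finsupp.single p 1 = w' + Finsupp.single q 1) : mdeg w' = mdeg w := by
  have := congrArg mdeg h
  simp only [mdeg_add, mdeg_single] at this
  omega

lemma SegLike.mdeg_sPart_eq (hB : SegLike B z l d) (h1 : tot m = tot m')
    (h2 : edeg (tPart m) = edeg (tPart m')) : mdeg (sPart m) = mdeg (sPart m') := by
  have key (m : (Fin n ⊕ ↥B) →₀ ℕ) : mdeg (tot m) = mdeg (sPart m) + edeg (tPart m) * d := by
    refine (map_tot (mdegHom n) m).trans ?_
    rw [edeg, Finsupp.sum, Finset.sum_mul]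
    congr 1
    exact Finset.sum_congr rfl fun w _ => by rw [← hB.deg w w.2]; rfl
  have e1 := key m
  have e2 := key m'
  rw [h1, h2] at e1
  omega

/-- Counting degrees in `x_1,…,x_l`: if `x^a` involves one of these variables and `x^b` does
not, some factor `T_w` of the monomial with `S`-part `x^b` has `w` of degree at least two in
`x_1,…,x_l`. -/
lemma SegLike.exists_two_le (hB : SegLike B z l d) (h1 : tot m = tot m')
    (h2 : edeg (tPart m) = edeg (tPart m')) (hm : 0 < headDeg n l (sPart m))
    (hm' : headDeg n l (sPart m') = 0) :
    ∃ w : ↥B, 0 < tPart m' w ∧ 2 ≤ headDeg n l (w : Mon n) := by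
  by_contra! hc
  have e1 := map_tot (headDeg n l) m
  have e2 := map_tot (headDeg n l) m'
  have b1 : edeg (tPart m) ≤ ∑ w ∈ (tPart m).support, tPart m w * headDeg n l (w : Mon n) :=
    Finset.sum_le_sum fun w _ => Nat.le_mul_of_pos_right _ (hB.one_le_headDeg w.2)
  have b2 : ∑ w ∈ (tPart m').support, tPart m' w * headDeg n l (w : Mon n) ≤ edeg (tPart m') := by
    refine Finset.sum_le_sum fun w hw => ?_
    have := hc w (Nat.pos_of_ne_zero (Finsupp.mem_support_iff.mp hw))
    exact (Nat.mul_le_mul_left _ (by omega : headDeg n l (w : Mon n) ≤ 1)).trans (by simp)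
  rw [h1] at e1
  omega

/-- The exchange that ends each case: suppose `x_p` divides the `S`-part of `m`, `x_q` divides that
of `m'`, and `x_p w / x_q ∈ B` for every `w ∈ B` divisible by `x_q`. If `x_q` does not already
divide the `S`-part of `m`, it divides some factor of `m`, and after the exchange both monomials are
divisible by `x_q`. -/
lemma TRel.of_exchange
    (IH : ∀ c c' : (Fin n ⊕ ↥B) →₀ ℕ, mdeg (sPart c) < mdeg (sPart m) → tot c = tot c' →
      edeg (tPart c) = edeg (tPart c') → TRel K c c')
    (hB : SegLike B z l d) (h1 : tot m = tot m') (h2 : edeg (tPart m) = edeg (tPart m'))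
    {p q : Fin n} (hp : 0 < sPart m p) (hq : 0 < sPart m' q)
    (hw : ∀ w ∈ B, 0 < w q → ∀ w', w + Finsupp.single p 1 = w' + Finsupp.single q 1 →
      (∀ i, w i + (if i = p then 1 else 0) = w' i + (if i = q then 1 else 0)) →
      w' ∈ B) : TRel K m m' := by
  by_cases hc : 0 < sPart m q
  · exact TRel.of_common IH h1 h2 hc hq
  obtain ⟨w, hwm, hwq⟩ : ∃ w : ↥B, 0 < tPart m w ∧ 0 < (w : Mon n) q := by
    apply exists_factor
    rw [h1, tot, Finsupp.add_apply]
    omega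
  obtain ⟨w', hw', hi⟩ := exists_replace (w : Mon n) p hwq
  obtain ⟨m'', r, t1, t2, hs⟩ :=
    TRel.exchange (K := K) (w' := ⟨w', hw w w.2 hwq w' hw' hi⟩) hp hwm hw'
  refine r.trans (TRel.of_common (i := q) (fun c c' hcc => IH c c' ?_) (t1.symm.trans h1)
    (t2.symm.trans h2) ?_ hq)
  · rwa [← hB.mdeg_sPart_eq t1 t2] at hcc
  · have := DFunLike.congr_fun hs q
    by_cases hpq : p = q
    · subst hpq; exact absurd hp hc
    · simp only [Finsupp.add_apply, Finsupp.single_apply, if_true, if_neg hpq] at this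
      omega

/-- The case `p ∈ {2,…,l}`, `q ∈ {1,…,l}`. -/
lemma TRel.of_middle
    (IH : ∀ c c' : (Fin n ⊕ ↥B) →₀ ℕ, mdeg (sPart c) < mdeg (sPart m) → tot c = tot c' →
      edeg (tPart c) = edeg (tPart c') → TRel K c c')
    (hB : SegLike B z l d) (h1 : tot m = tot m') (h2 : edeg (tPart m) = edeg (tPart m'))
    {p q : Fin n} (hp : 0 < sPart m p) (hq : 0 < sPart m' q) (hpz : p ≠ z) (hpl : (p : ℕ) < l)
    (hql : (q : ℕ) < l) : TRel K m m' := by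
  refine TRel.of_exchange IH hB h1 h2 hp hq fun w hw hwq w' hw' hi => ?_
  have hz := hi z
  have hpp := hi p
  have hone := hB.le_one w hw
  rw [if_neg (Ne.symm hpz)] at hz
  rw [if_pos rfl] at hpp
  by_cases hpq : p = q
  · subst hpq
    rw [← add_right_cancel hw']; exact hw
  rw [if_neg hpq] at hpp
  refine hB.mem w' ((mdeg_replace hw').trans (hB.deg w hw)) ?_ p hpz hpl (by omega)
  by_cases hqz : z = q
  · subst hqz; simp at hz; omega
  · rw [if_neg hqz] at hz
    by_contra hne
    have := hB.of_one w hw (by omega) q (Ne.symm hqz) hql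
    omega

/-- The case `p, q ∈ {1,…,l}`. -/
lemma TRel.of_head
    (IH : ∀ c c' : (Fin n ⊕ ↥B) →₀ ℕ, mdeg (sPart c) < mdeg (sPart m) → tot c = tot c' →
      edeg (tPart c) = edeg (tPart c') → TRel K c c')
    (hB : SegLike B z l d) (h1 : tot m = tot m') (h2 : edeg (tPart m) = edeg (tPart m'))
    {p q : Fin n} (hp : 0 < sPart m p) (hq : 0 < sPart m' q) (hpl : (p : ℕ) < l)
    (hql : (q : ℕ) < l) : TRel K m m' := by
  by_cases hpz : p = z
  · by_cases hqz : q = z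
    · subst hpz; subst hqz; exact TRel.of_common IH h1 h2 hp hq
    · rw [hB.mdeg_sPart_eq h1 h2] at IH
      exact (TRel.of_middle IH hB h1.symm h2.symm hq hp hqz hql hpl).symm
  · exact TRel.of_middle IH hB h1 h2 hp hq hpz hpl hql

/-- The case `p ∈ {1,…,l}`: if the `S`-part of `m'` involves only `x_{l+1},…,x_n`, one linear
exchange brings one of `x_2,…,x_l` into it. -/
lemma TRel.of_left_head
    (IH : ∀ c c' : (Fin n ⊕ ↥B) →₀ ℕ, mdeg (sPart c) < mdeg (sPart m) → tot c = tot c' →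
      edeg (tPart c) = edeg (tPart c') → TRel K c c')
    (hB : SegLike B z l d) (h1 : tot m = tot m') (h2 : edeg (tPart m) = edeg (tPart m'))
    {p q : Fin n} (hp : 0 < sPart m p) (hq : 0 < sPart m' q) (hpl : (p : ℕ) < l) :
    TRel K m m' := by
  by_cases hm' : 0 < headDeg n l (sPart m')
  · obtain ⟨q', hql, hq'⟩ := (headDeg_pos l _).mp hm'
    exact TRel.of_head IH hB h1 h2 hp hq' hpl hql
  have hql : ¬ (q : ℕ) < l := fun hql => hm' ((headDeg_pos l _).mpr ⟨q, hql, hq⟩)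
  obtain ⟨w, hwm, hw2⟩ := hB.exists_two_le h1 h2 ((headDeg_pos l _).mpr ⟨p, hpl, hp⟩)
    (Nat.eq_zero_of_not_pos hm')
  have hwz := hB.eq_zero_of_two_le w.2 hw2
  obtain ⟨r, hrz, hrl, hwr⟩ := hB.of_zero w w.2 hwz
  obtain ⟨w', hw', hi⟩ := exists_replace (w : Mon n) q hwr
  have hqz : z ≠ q := by rintro rfl; exact hql hB.z_lt
  have hw'z : w' z = 0 := by
    have := hi z
    rw [if_neg hqz, if_neg (Ne.symm hrz)] at this
    omega
  -- `w' = x_q w / x_r` still involves one of `x_2,…,x_l`, as `w` had degree at least two there.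
  have hw'B : w' ∈ B := by
    have e := congrArg (headDeg n l) hw'
    rw [map_add, map_add, headDeg_single, headDeg_single, if_neg hql, if_pos hrl] at e
    obtain ⟨i, hil, hi0⟩ := (headDeg_pos l w').mp (by omega)
    refine hB.mem w' ((mdeg_replace hw').trans (hB.deg w w.2)) hw'z i ?_ hil hi0
    rintro rfl; omega
  obtain ⟨m'', rel, t1, t2, hs⟩ := TRel.exchange (K := K) (w' := ⟨w', hw'B⟩) hq hwm hw'
  refine (TRel.of_head IH hB (h1.trans t1) (h2.trans t2) hp (q := r) ?_ hpl hrl).trans rel.symm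
  have := DFunLike.congr_fun hs r
  have hqr : q ≠ r := by rintro rfl; exact hql hrl
  simp only [Finsupp.add_apply, Finsupp.single_apply, if_true, if_neg hqr] at this
  omega

/-- Monomials of `𝒯` with the same image are related, by induction on the degree of the `S`-part. -/
theorem SegLike.rel (hB : SegLike B z l d) (D : ℕ) : ∀ m m' : (Fin n ⊕ ↥B) →₀ ℕ,
    mdeg (sPart m) = D → tot m = tot m' → edeg (tPart m) = edeg (tPart m') → TRel K m m' := by
  induction D using Nat.strong_induction_on with
  | _ D ih =>
  intro m m' hD h1 h2
  have IH : ∀ c c' : (Fin n ⊕ ↥B) →₀ ℕ, mdeg (sPart c) < mdeg (sPart m) → tot c = tot c' →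
      edeg (tPart c) = edeg (tPart c') → TRel K c c' :=
    fun c c' hc => ih _ (hD ▸ hc) c c' rfl
  have hdeg := hB.mdeg_sPart_eq h1 h2
  have IH' := IH
  rw [hdeg] at IH'
  have ex (a : Mon n) (ha : mdeg a ≠ 0) : ∃ i, 0 < a i := by
    by_contra! hc
    exact ha (Finset.sum_eq_zero fun i _ => Nat.le_zero.mp (hc i))
  by_cases h0 : mdeg (sPart m) = 0
  · have h0' := hdeg ▸ h0
    exact TRel.of_onlyT h1 h2 (fun i => Finset.sum_eq_zero_iff.mp h0 i (Finset.mem_univ _))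
      (fun i => Finset.sum_eq_zero_iff.mp h0' i (Finset.mem_univ _))
  obtain ⟨p, hp⟩ := ex _ h0
  obtain ⟨q, hq⟩ := ex _ (hdeg ▸ h0)
  by_cases hpl : (p : ℕ) < l
  · exact TRel.of_left_head IH hB h1 h2 hp hq hpl
  by_cases hql : (q : ℕ) < l
  · exact (TRel.of_left_head IH' hB h1.symm h2.symm hq hp hql).symm
  rcases lt_trichotomy p q with hpq | rfl | hpq
  · exact (TRel.of_exchange IH' hB h1.symm h2.symm hq hp fun w hw _ w' hw' _ =>
      hB.shift w hw q p (not_lt.mp hpl) hpq w' hw').symm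
  · exact TRel.of_common IH h1 h2 hp hq
  · exact TRel.of_exchange IH hB h1 h2 hp hq fun w hw _ w' hw' _ =>
      hB.shift w hw p q (not_lt.mp hql) hpq w' hw'

end Core

/-! ### The lexsegment -/

lemma lexLT_trans {n : ℕ} {a b c : Mon n} (h : LexLT a b) (h' : LexLT b c) : LexLT a c := by
  obtain ⟨i, hi, hi'⟩ := h
  obtain ⟨j, hj, hj'⟩ := h'
  rcases lt_trichotomy i j with hij | rfl | hij
  · exact ⟨i, fun k hk => (hi k hk).trans (hj k (hk.trans hij)), (hj i hij) ▸ hi'⟩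
  · exact ⟨i, fun k hk => (hi k hk).trans (hj k hk), hi'.trans hj'⟩
  · exact ⟨j, fun k hk => (hi k (hk.trans hij)).trans (hj k hk), (hi j hij) ▸ hj'⟩

lemma lexLE_or_lexLT {n : ℕ} (a b : Mon n) : LexLE a b ∨ LexLT b a := by
  by_cases h : a = b
  · exact Or.inl (Or.inl h)
  obtain ⟨i, hi, hmin⟩ := WellFounded.has_min (wellFounded_lt (α := Fin n)) {i | a i ≠ b i}
    (by by_contra hc
        rw [Set.not_nonempty_iff_eq_empty] at hc
        refine h (Finsupp.ext fun i => ?_)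
        by_contra hne
        have : i ∈ ({i | a i ≠ b i} : Set (Fin n)) := hne
        simp [hc] at this)
  have heq : ∀ j, j < i → a j = b j := fun j hj => by
    by_contra hne; exact hmin j hne hj
  rcases lt_or_gt_of_ne hi with hlt | hlt
  · exact Or.inl (Or.inr ⟨i, heq, hlt⟩)
  · exact Or.inr ⟨i, fun j hj => (heq j hj).symm, hlt⟩

lemma segLike_LSeg {n : ℕ} (l d : ℕ) (hl : 2 ≤ l) (hln : l ≤ n - 1) (hd : 2 ≤ d)
    (z y t : Fin n) (hz : (z : ℕ) = 0) (hy : (y : ℕ) = l - 1) (ht : (t : ℕ) = n - 1)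
    (u v : Mon n) (hu1 : u z = 1)
    (humid : ∀ i : Fin n, 1 ≤ (i : ℕ) → (i : ℕ) < l → u i = 0)
    (hv : v = Finsupp.single y 1 + Finsupp.single t (d - 1)) :
    SegLike (LSeg u v d) z l d := by
  have hpos (i : Fin n) (hi : i ≠ z) : 1 ≤ (i : ℕ) := by
    rw [Ne, Fin.ext_iff] at hi
    omega
  have hvl : v y = 1 := by
    have : t ≠ y := by rw [Ne, Fin.ext_iff]; omega
    simp [hv, this]
  have hv0 (i : Fin n) (h1 : (i : ℕ) ≠ l - 1) (h2 : (i : ℕ) ≠ n - 1) : v i = 0 := by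
    rw [← hy] at h1
    rw [← ht] at h2
    simp [hv, Fin.ext_iff, Ne.symm h1, Ne.symm h2]
  have hmem : ∀ w : Mon n, mdeg w = d → w z = 0 → ∀ i : Fin n,
      i ≠ z → (i : ℕ) < l → 0 < w i → w ∈ LSeg u v d := by
    intro w hwd hw0 i hi0 hil hi
    refine ⟨hwd, Or.inr ⟨z, fun j hj => absurd hj (by simp [Fin.lt_def, hz]), by omega⟩, ?_⟩
    -- `v` is the smallest monomial of degree `d` divisible by one of `x_2,…,x_l`.
    rcases lexLE_or_lexLT v w with h | ⟨j, hj, hjlt⟩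
    · exact h
    exfalso
    by_cases h1 : (j : ℕ) = l - 1
    · rcases lt_or_eq_of_le (show (i : ℕ) ≤ j by omega) with h | h
      · have := hj i h
        rw [hv0 i (by omega) (by omega)] at this
        omega
      · have hij : i = j := Fin.ext h
        have hjl : j = y := Fin.ext (h1.trans hy.symm)
        rw [hjl, hvl, ← hjl, ← hij] at hjlt
        omega
    · have h2 : (j : ℕ) = n - 1 := by
        by_contra h2
        rw [hv0 j h1 h2] at hjlt
        omega
      have hvd : mdeg v = d := by rw [hv, mdeg_add, mdeg_single, mdeg_single]; omega
      have : mdeg w < mdeg v := by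
        refine Finset.sum_lt_sum (fun k _ => ?_) ⟨j, Finset.mem_univ _, hjlt⟩
        rcases lt_or_eq_of_le (show (k : ℕ) ≤ j by omega) with h | h
        · exact (hj k h).le
        · rw [Fin.ext h]; exact hjlt.le
      omega
  have hle : ∀ w ∈ LSeg u v d, w z ≤ 1 := by
    rintro w ⟨-, rfl | ⟨i, hi, hlt⟩, -⟩
    · exact hu1.le
    · by_cases h : i = z
      · rw [h, hu1] at hlt; exact hlt.le
      · rw [hi _ (Fin.lt_def.mpr (by have := hpos i h; omega)), hu1]
  have hzero : ∀ w ∈ LSeg u v d, w z = 0 →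
      ∃ i : Fin n, i ≠ z ∧ (i : ℕ) < l ∧ 0 < w i := by
    have hne : y ≠ z := by
      rw [Ne, Fin.ext_iff]; omega
    rintro w ⟨-, -, rfl | ⟨i, hi, hlt⟩⟩ hw0
    · exact ⟨_, hne, show (y : ℕ) < l by omega, by omega⟩
    · by_cases h : (i : ℕ) < l
      · refine ⟨i, ?_, h, by omega⟩
        intro h; rw [h, hw0] at hlt; exact Nat.not_lt_zero _ hlt
      · refine ⟨_, hne, show (y : ℕ) < l by omega, ?_⟩
        rw [← hi y (show (y : ℕ) < i by omega), hvl]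
        exact one_pos
  refine ⟨show (z : ℕ) < l by omega, fun w hw => hw.1, hle, ?_, hzero, hmem, ?_⟩
  · rintro w ⟨-, rfl | ⟨i, hi, hlt⟩, -⟩ hw1 j hj hjl
    · exact humid j (hpos j hj) hjl
    · have hi0 : i ≠ z := by
        intro h; rw [h, hw1, hu1] at hlt; exact lt_irrefl _ hlt
      by_cases hil : (i : ℕ) < l
      · rw [humid i (hpos i hi0) hil] at hlt
        omega
      · rw [hi j (show (j : ℕ) < i by omega), humid j (hpos j hj) hjl]
  · intro w hw p q hlq hqp w' h
    have hi (i : Fin n) :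
        w i + (if p = i then 1 else 0) = w' i + (if q = i then 1 else 0) := by
      simpa [Finsupp.single_apply] using DFunLike.congr_fun h i
    have hsame (i : Fin n) (hiq : i < q) : w' i = w i := by
      have := hi i
      rw [if_neg (hiq.trans hqp).ne', if_neg hiq.ne'] at this
      omega
    have hwz : w' z = w z := hsame _ (show (z : ℕ) < q by omega)
    have hdeg : mdeg w' = d := (mdeg_replace h).trans hw.1
    rcases Nat.eq_zero_or_pos (w z) with h0 | h0
    · obtain ⟨i, hi0, hil, hiw⟩ := hzero w hw h0
      exact hmem w' hdeg (hwz.trans h0) i hi0 hil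
        ((hsame i (show (i : ℕ) < q by omega)).symm ▸ hiw)
    · have hlt : LexLT w' w := by
        refine ⟨q, hsame, ?_⟩
        have := hi q
        rw [if_neg hqp.ne', if_pos rfl] at this
        omega
      refine ⟨hdeg, Or.inr ?_, Or.inr ⟨z, fun j hj => absurd hj (by simp [Fin.lt_def, hz]), ?_⟩⟩
      · rcases hw.2.1 with rfl | h'
        · exact hlt
        · exact lexLT_trans hlt h'
      · rw [hv0 _ (show (z : ℕ) ≠ l - 1 by omega) (show (z : ℕ) ≠ n - 1 by omega), hwz]
        exact h0

/-- for `2 ≤ l ≤ n-1`, `u = x_1 x_{l+1}^{a_{l+1}}⋯x_n^{a_n}` and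
`v = x_l x_n^{d-1}` of degree `d` with `u ≥_lex v`, the lexsegment ideal `I = (L(u,v))`
is of fiber type. -/
theorem stmt14 {n : ℕ} (K : Type*) [Field K] (l d : ℕ)
    (hl : 2 ≤ l) (hln : l ≤ n - 1) (hd : 2 ≤ d)
    (u v : Mon n) (hud : mdeg u = d)
    (hu1 : u ⟨0, by omega⟩ = 1)
    (humid : ∀ i : Fin n, 1 ≤ (i : ℕ) → (i : ℕ) < l → u i = 0)
    (hv : v = Finsupp.single (⟨l - 1, by omega⟩ : Fin n) 1 +
      Finsupp.single (⟨n - 1, by omega⟩ : Fin n) (d - 1))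
    (huv : LexLE v u) :
    IsFiberType K (LSeg u v d) := by
  exact isFiberType_of_rel fun m m' h1 h2 =>
    (segLike_LSeg l d hl hln hd _ _ _ rfl rfl rfl u v hu1 humid hv).rel _ m m' rfl h1 h2
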